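/- Let q > 1 be real, λ a real number, and φ ≤ k natural numbers. For j ∈ ℕ and real ρ define f_{j,ρ}(X,Y) = Σ_{u=0}^{j} [j;u] γ(ρ,u) Y^u X^{j−u} and g_j(X,Y) = Σ_{u=0}^{j} (−1)^u q^{u(u−1)} [j;u] Y^u X^{j−u}. Then for every X ∈ ℝ and every Y ≠ 0, the φ-fold skew-q^{-1}-derivative with respect to Y satisfies (f_{k,λ}(X,·))^{{φ}}(Y) = q^{−2σ_φ} β(k,φ) γ(λ,φ) · f_{k−φ, λ−2φ}(X,Y) and (g_k(X,·))^{{φ}}(Y) = (−1)^φ β(k,φ) · g_{k−φ}(X,Y). -/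

import Mathlib

/-- The skew-q-nary Gaussian coefficient `[x;k]` for real `x`. -/
noncomputable def gaussQ (q x : ℝ) (k : ℕ) : ℝ :=
  ∏ i ∈ Finset.range k, (q ^ (2 * x) - q ^ (2 * (i : ℝ))) / (q ^ (2 * (k : ℝ)) - q ^ (2 * (i : ℝ)))

/-- The skew-q-nary Gamma function `γ(x,k)`. -/
noncomputable def skewGamma (q x : ℝ) (k : ℕ) : ℝ :=
  ∏ i ∈ Finset.range k, (q ^ x - q ^ (2 * (i : ℝ)))

/-- The skew-q-nary Beta function `β(x,k)`. -/
noncomputable def betaQ (q x : ℝ) (k : ℕ) : ℝ :=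
  ∏ i ∈ Finset.range k, (q ^ (2 * (x - (i : ℝ))) - 1) / (q ^ 2 - 1)

/-- The skew-q⁻¹-derivative operator. -/
noncomputable def qInvDeriv (q : ℝ) (h : ℝ → ℝ) : ℝ → ℝ :=
  fun Y => (h ((q ^ 2)⁻¹ * Y) - h Y) / (((q ^ 2)⁻¹ - 1) * Y)

/-!
Both polynomials have the shape `P_a = ∑ [n;u] a_u Y^u X^(n-u)`. The derivative sends `Y^(u+1)` to
`q^(-2u) [u+1] Y^u`, where `[x] = (q^(2x) - 1) / (q² - 1)`, so by the absorption identity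
`[u+1] [n+1;u+1] = [n+1] [n;u]` it turns `P_a`, of degree `n + 1`, into `c [n+1] P_b` as soon as
`a_(u+1) = c q^(2u) b_u`. Such a recurrence holds for `a_u = γ(ρ,u)`, with `b_u = γ(ρ-2,u)` and
`c = q^ρ - 1`, and for `a_u = (-1)^u q^(u(u-1))`, with `b = a` and `c = -1`. Hence the step can be
iterated, and the factors `[n+1]` multiply up to `β`.
-/

open Finset

/-- The `q²`-analogue `[x] = (q^(2x) - 1) / (q² - 1)` of a real number `x`: the factor that both
`betaQ` and the derivative of a power are built from. -/
noncomputable def qNumber (q x : ℝ) : ℝ :=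
  (q ^ (2 * x) - 1) / (q ^ 2 - 1)

/-- The homogeneous polynomial `∑ [n;u] a_u Y^u X^(n-u)`. It is `f_{n,ρ}` for `a_u = γ(ρ,u)` and
`g_n` for `a_u = (-1)^u q^(u(u-1))`; keeping `a` arbitrary lets both be differentiated at once. -/
noncomputable def gaussPoly (q : ℝ) (a : ℕ → ℝ) (n : ℕ) (X : ℝ) : ℝ → ℝ :=
  fun Y => ∑ u ∈ range (n + 1), a u * gaussQ q n u * Y ^ u * X ^ (n - u)

section Linearity

theorem qInvDeriv_const (q c Y : ℝ) : qInvDeriv q (fun _ => c) Y = 0 := by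
  rw [qInvDeriv, sub_self, zero_div]

theorem qInvDeriv_const_mul (q c : ℝ) (h : ℝ → ℝ) (Y : ℝ) :
    qInvDeriv q (fun Z => c * h Z) Y = c * qInvDeriv q h Y := by
  rw [qInvDeriv, qInvDeriv, ← mul_sub, mul_div_assoc]

theorem qInvDeriv_sum {ι : Type*} (q : ℝ) (s : Finset ι) (h : ι → ℝ → ℝ) (Y : ℝ) :
    qInvDeriv q (fun Z => ∑ i ∈ s, h i Z) Y = ∑ i ∈ s, qInvDeriv q (h i) Y := by
  simp only [qInvDeriv, ← sum_div, sum_sub_distrib]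

-- At `0` the operator has the junk value `0`, so its iterates can only be compared on `{0}ᶜ`.
theorem eqOn_qInvDeriv {q : ℝ} (hq : q ≠ 0) {h g : ℝ → ℝ} (hhg : Set.EqOn h g {0}ᶜ) :
    Set.EqOn (qInvDeriv q h) (qInvDeriv q g) {0}ᶜ := by
  intro Y hY
  have hqY : (q ^ 2)⁻¹ * Y ∈ ({0}ᶜ : Set ℝ) := mul_ne_zero (inv_ne_zero (pow_ne_zero 2 hq)) hY
  rw [qInvDeriv, qInvDeriv, hhg hY, hhg hqY]

end Linearity

section Recurrences

variable {q : ℝ}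

theorem betaQ_succ (q x : ℝ) (n : ℕ) : betaQ q x (n + 1) = betaQ q x n * qNumber q (x - n) :=
  prod_range_succ _ n

theorem neg_one_pow_mul_pow_succ {R : Type*} [CommRing R] (q : R) (u : ℕ) :
    (-1) ^ (u + 1) * q ^ ((u + 1) * (u + 1 - 1)) =
      -1 * (q ^ 2) ^ u * ((-1) ^ u * q ^ (u * (u - 1))) := by
  have hexp : (u + 1) * (u + 1 - 1) = 2 * u + u * (u - 1) := by
    cases u with
    | zero => rfl
    | succ v => simp only [Nat.add_sub_cancel]; ring
  rw [hexp, pow_add, pow_mul]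
  ring

theorem rpow_add_two (hq : 0 < q) (x : ℝ) : q ^ (x + 2) = q ^ x * q ^ 2 :=
  mod_cast Real.rpow_add_natCast hq.ne' x 2

theorem skewGamma_succ (hq : 0 < q) (x : ℝ) (n : ℕ) :
    skewGamma q x (n + 1) = q ^ (2 * (n : ℝ)) * (q ^ (x - 2 * n) - 1) * skewGamma q x n := by
  have hlast : q ^ x - q ^ (2 * (n : ℝ)) = q ^ (2 * (n : ℝ)) * (q ^ (x - 2 * n) - 1) := by
    rw [mul_sub, ← Real.rpow_add hq, add_sub_cancel, mul_one]
  rw [skewGamma, prod_range_succ, hlast, mul_comm, skewGamma]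

theorem prod_rpow_sub_one (hq : 0 < q) (x : ℝ) (n : ℕ) :
    ∏ i ∈ range n, (q ^ (x - 2 * i) - 1) = q ^ (-((n : ℝ) * (n - 1))) * skewGamma q x n := by
  induction n with
  | zero => simp [skewGamma]
  | succ n ih =>
    have hexp : -((n : ℝ) * (n - 1)) = -(((n + 1 : ℕ) : ℝ) * ((n + 1 : ℕ) - 1)) + 2 * n := by
      push_cast
      ring
    rw [prod_range_succ, ih, skewGamma_succ hq, hexp, Real.rpow_add hq]
    ring

theorem skewGamma_succ_eq_mul_sub_two (hq : 0 < q) (x : ℝ) (n : ℕ) :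
    skewGamma q x (n + 1) = (q ^ x - 1) * (q ^ 2) ^ n * skewGamma q (x - 2) n := by
  have hfactor (i : ℕ) : q ^ x - q ^ (2 * ((i + 1 : ℕ) : ℝ)) =
      q ^ 2 * (q ^ (x - 2) - q ^ (2 * (i : ℝ))) := by
    rw [Nat.cast_succ, mul_add_one, rpow_add_two hq, ← sub_add_cancel x 2, rpow_add_two hq,
      sub_add_cancel]
    ring
  simp only [skewGamma, prod_range_succ', hfactor, prod_mul_distrib, prod_const, card_range,
    Nat.cast_zero, mul_zero, Real.rpow_zero]
  ring

theorem sq_sub_one_ne_zero {R : Type*} [Ring R] [LinearOrder R] [IsStrictOrderedRing R] {r : R}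
    (hr0 : 0 ≤ r) (hr1 : r ≠ 1) : r ^ 2 - 1 ≠ 0 :=
  sub_ne_zero.2 ((pow_eq_one_iff_of_nonneg hr0 two_ne_zero).not.2 hr1)

theorem qNumber_ne_zero (hq0 : 0 < q) (hq1 : q ≠ 1) {x : ℝ} (hx : x ≠ 0) : qNumber q x ≠ 0 := by
  have hnum : q ^ (2 * x) ≠ q ^ (0 : ℝ) :=
    (Real.rpow_right_inj hq0 hq1).not.2 (mul_ne_zero two_ne_zero hx)
  rw [Real.rpow_zero] at hnum
  exact div_ne_zero (sub_ne_zero.2 hnum) (sq_sub_one_ne_zero hq0.le hq1)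

theorem qNumber_mul_gaussQ_succ (hq0 : 0 < q) (hq1 : q ≠ 1) (x : ℝ) (n : ℕ) :
    qNumber q (n + 1) * gaussQ q (x + 1) (n + 1) = qNumber q (x + 1) * gaussQ q x n := by
  have hq2 : q ^ 2 ≠ 0 := pow_ne_zero 2 hq0.ne'
  have hden : q ^ 2 - 1 ≠ 0 := sq_sub_one_ne_zero hq0.le hq1
  have hfactor (i : ℕ) :
      (q ^ (2 * (x + 1)) - q ^ (2 * ((i + 1 : ℕ) : ℝ))) /
          (q ^ (2 * ((n + 1 : ℕ) : ℝ)) - q ^ (2 * ((i + 1 : ℕ) : ℝ))) =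
        (q ^ (2 * x) - q ^ (2 * (i : ℝ))) / (q ^ (2 * (n : ℝ)) - q ^ (2 * (i : ℝ))) := by
    simp only [Nat.cast_succ, mul_add_one, rpow_add_two hq0, ← sub_mul,
      mul_div_mul_right _ _ hq2]
  have hfirst : (q ^ (2 * (x + 1)) - 1) / (q ^ (2 * ((n + 1 : ℕ) : ℝ)) - 1) =
      qNumber q (x + 1) / qNumber q (n + 1) := by
    rw [qNumber, qNumber, Nat.cast_succ, div_div_div_cancel_right₀ hden]
  have hn : qNumber q (n + 1) ≠ 0 := qNumber_ne_zero hq0 hq1 n.cast_add_one_ne_zero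
  simp only [gaussQ, prod_range_succ', hfactor, Nat.cast_zero, mul_zero, Real.rpow_zero, hfirst]
  field_simp

end Recurrences

section Derivatives

variable {q : ℝ}

theorem rpow_two_mul_natCast (q : ℝ) (n : ℕ) : q ^ (2 * (n : ℝ)) = (q ^ 2) ^ n := by
  rw [← pow_mul, ← Real.rpow_natCast]
  push_cast
  rfl

theorem qInvDeriv_pow_succ (hq0 : 0 < q) (hq1 : q ≠ 1) (n : ℕ) {Y : ℝ} (hY : Y ≠ 0) :
    qInvDeriv q (fun Z => Z ^ (n + 1)) Y = qNumber q (n + 1) / (q ^ 2) ^ n * Y ^ n := by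
  have hden : q ^ 2 - 1 ≠ 0 := sq_sub_one_ne_zero hq0.le hq1
  have hinv : (q ^ 2)⁻¹ - 1 = -(q ^ 2 - 1) / q ^ 2 := by
    field_simp
    ring
  rw [qInvDeriv, qNumber, ← Nat.cast_succ, rpow_two_mul_natCast, hinv, mul_pow, inv_pow]
  field_simp
  ring

theorem qInvDeriv_sum_mul_pow (hq0 : 0 < q) (hq1 : q ≠ 1) (a : ℕ → ℝ) (n : ℕ) {Y : ℝ}
    (hY : Y ≠ 0) :
    qInvDeriv q (fun Z => ∑ u ∈ range (n + 1), a u * Z ^ u) Y =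
      ∑ u ∈ range n, a (u + 1) * (qNumber q (u + 1) / (q ^ 2) ^ u * Y ^ u) := by
  rw [qInvDeriv_sum, sum_range_succ']
  simp only [qInvDeriv_const_mul, qInvDeriv_pow_succ hq0 hq1 _ hY, pow_zero, qInvDeriv_const,
    mul_zero, add_zero]

theorem qInvDeriv_gaussPoly_succ (hq0 : 0 < q) (hq1 : q ≠ 1) {a b : ℕ → ℝ} {c : ℝ}
    (hab : ∀ u, a (u + 1) = c * (q ^ 2) ^ u * b u) (n : ℕ) (X : ℝ) {Y : ℝ} (hY : Y ≠ 0) :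
    qInvDeriv q (gaussPoly q a (n + 1) X) Y = c * qNumber q (n + 1) * gaussPoly q b n X Y := by
  have hcoeff (u : ℕ) :
      a (u + 1) * gaussQ q (n + 1) (u + 1) * (qNumber q (u + 1) / (q ^ 2) ^ u) =
        c * qNumber q (n + 1) * (b u * gaussQ q n u) := by
    rw [hab]
    field_simp
    linear_combination c * b u * qNumber_mul_gaussQ_succ hq0 hq1 n u
  unfold gaussPoly
  simp only [mul_right_comm _ (_ ^ _) (X ^ _)]
  rw [qInvDeriv_sum_mul_pow hq0 hq1 _ _ hY, mul_sum]
  refine sum_congr rfl fun u _ => ?_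
  rw [Nat.cast_succ, Nat.add_sub_add_right]
  linear_combination X ^ (n - u) * Y ^ u * hcoeff u

theorem qInvDeriv_iterate_gaussPoly (hq0 : 0 < q) (hq1 : q ≠ 1) {a : ℕ → ℕ → ℝ} {c : ℕ → ℝ}
    (ha : ∀ i u, a i (u + 1) = c i * (q ^ 2) ^ u * a (i + 1) u) (X : ℝ) {m n : ℕ} (hmn : m ≤ n) :
    Set.EqOn ((qInvDeriv q)^[m] (gaussPoly q (a 0) n X))
      (fun Y => betaQ q n m * (∏ i ∈ range m, c i) * gaussPoly q (a m) (n - m) X Y) {0}ᶜ := by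
  induction m with
  | zero => simp [betaQ, Set.EqOn]
  | succ m ih =>
    intro Y hY
    obtain ⟨d, rfl⟩ := Nat.exists_eq_add_of_le' hmn
    have hdeg : d + (m + 1) - m = d + 1 := by omega
    have hcast : ((d + (m + 1) : ℕ) : ℝ) - m = d + 1 := by push_cast; ring
    set C := betaQ q (d + (m + 1) : ℕ) m * ∏ i ∈ range m, c i with hC
    rw [hdeg] at ih
    calc (qInvDeriv q)^[m + 1] (gaussPoly q (a 0) (d + (m + 1)) X) Y
        = qInvDeriv q (fun Z => C * gaussPoly q (a m) (d + 1) X Z) Y := by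
          rw [Function.iterate_succ_apply']
          exact eqOn_qInvDeriv hq0.ne' (ih (by omega)) hY
      _ = C * (c m * qNumber q (d + 1) * gaussPoly q (a (m + 1)) d X Y) := by
          rw [qInvDeriv_const_mul, qInvDeriv_gaussPoly_succ hq0 hq1 (ha m) d X hY]
      _ = betaQ q (d + (m + 1) : ℕ) (m + 1) * (∏ i ∈ range (m + 1), c i) *
            gaussPoly q (a (m + 1)) (d + (m + 1) - (m + 1)) X Y := by
          rw [betaQ_succ, hcast, prod_range_succ, Nat.add_sub_cancel, hC]
          ring

theorem qInvDeriv_iterate_gaussPoly_skewGamma (hq0 : 0 < q) (hq1 : q ≠ 1) (x X : ℝ) {m n : ℕ}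
    (hmn : m ≤ n) {Y : ℝ} (hY : Y ≠ 0) :
    (qInvDeriv q)^[m] (gaussPoly q (skewGamma q x) n X) Y =
      q ^ (-((m : ℝ) * (m - 1))) * betaQ q n m * skewGamma q x m *
        gaussPoly q (skewGamma q (x - 2 * m)) (n - m) X Y := by
  have hrec (i u : ℕ) : skewGamma q (x - 2 * i) (u + 1) =
      (q ^ (x - 2 * i) - 1) * (q ^ 2) ^ u * skewGamma q (x - 2 * (i + 1 : ℕ)) u := by
    rw [skewGamma_succ_eq_mul_sub_two hq0, Nat.cast_succ, mul_add_one, sub_sub]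
  have h := qInvDeriv_iterate_gaussPoly hq0 hq1 hrec X hmn hY
  rw [Nat.cast_zero, mul_zero, sub_zero, prod_rpow_sub_one hq0] at h
  rw [h]
  ring

theorem qInvDeriv_iterate_gaussPoly_alternating (hq0 : 0 < q) (hq1 : q ≠ 1) (X : ℝ) {m n : ℕ}
    (hmn : m ≤ n) {Y : ℝ} (hY : Y ≠ 0) :
    (qInvDeriv q)^[m] (gaussPoly q (fun u => (-1) ^ u * q ^ (u * (u - 1))) n X) Y =
      (-1) ^ m * betaQ q n m *
        gaussPoly q (fun u => (-1) ^ u * q ^ (u * (u - 1))) (n - m) X Y := by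
  have h := qInvDeriv_iterate_gaussPoly hq0 hq1
    (a := fun _ u => (-1) ^ u * q ^ (u * (u - 1))) (c := fun _ => -1)
    (fun _ => neg_one_pow_mul_pow_succ q) X hmn hY
  rw [h, prod_const, card_range, mul_comm (betaQ q n m)]

end Derivatives

theorem stmt8_general (q : ℝ) (hq0 : 0 < q) (hq1 : q ≠ 1) (lam : ℝ) (φ k : ℕ)
    (hφ : φ ≤ k) (X Y : ℝ) (hY : Y ≠ 0) :
    ((qInvDeriv q)^[φ] (fun Z => ∑ u ∈ Finset.range (k + 1),
          gaussQ q (k : ℝ) u * skewGamma q lam u * Z ^ u * X ^ (k - u))) Y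
        = q ^ (-((φ : ℝ) * ((φ : ℝ) - 1))) * betaQ q (k : ℝ) φ * skewGamma q lam φ *
            ∑ u ∈ Finset.range ((k - φ) + 1),
              gaussQ q ((k - φ : ℕ) : ℝ) u * skewGamma q (lam - 2 * (φ : ℝ)) u * Y ^ u *
                X ^ ((k - φ) - u)
    ∧ ((qInvDeriv q)^[φ] (fun Z => ∑ u ∈ Finset.range (k + 1),
          (-1 : ℝ) ^ u * q ^ (u * (u - 1)) * gaussQ q (k : ℝ) u * Z ^ u * X ^ (k - u))) Y
        = (-1 : ℝ) ^ φ * betaQ q (k : ℝ) φ *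
            ∑ u ∈ Finset.range ((k - φ) + 1),
              (-1 : ℝ) ^ u * q ^ (u * (u - 1)) * gaussQ q ((k - φ : ℕ) : ℝ) u * Y ^ u *
                X ^ ((k - φ) - u) := by
  have hf := qInvDeriv_iterate_gaussPoly_skewGamma hq0 hq1 lam X hφ hY
  have hg := qInvDeriv_iterate_gaussPoly_alternating hq0 hq1 X hφ hY
  unfold gaussPoly at hf hg
  simp only [mul_comm (skewGamma _ _ _) (gaussQ _ _ _)] at hf
  exact ⟨hf, hg⟩

theorem stmt8 (q : ℝ) (hq : 1 < q) (lam : ℝ) (φ k : ℕ) (hφ : φ ≤ k) (X Y : ℝ) (hY : Y ≠ 0) :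
    ((qInvDeriv q)^[φ] (fun Z => ∑ u ∈ Finset.range (k + 1),
          gaussQ q (k : ℝ) u * skewGamma q lam u * Z ^ u * X ^ (k - u))) Y
        = q ^ (-((φ : ℝ) * ((φ : ℝ) - 1))) * betaQ q (k : ℝ) φ * skewGamma q lam φ *
            ∑ u ∈ Finset.range ((k - φ) + 1),
              gaussQ q ((k - φ : ℕ) : ℝ) u * skewGamma q (lam - 2 * (φ : ℝ)) u * Y ^ u *
                X ^ ((k - φ) - u)
    ∧ ((qInvDeriv q)^[φ] (fun Z => ∑ u ∈ Finset.range (k + 1),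
          (-1 : ℝ) ^ u * q ^ (u * (u - 1)) * gaussQ q (k : ℝ) u * Z ^ u * X ^ (k - u))) Y
        = (-1 : ℝ) ^ φ * betaQ q (k : ℝ) φ *
            ∑ u ∈ Finset.range ((k - φ) + 1),
              (-1 : ℝ) ^ u * q ^ (u * (u - 1)) * gaussQ q ((k - φ : ℕ) : ℝ) u * Y ^ u *
                X ^ ((k - φ) - u) :=
  stmt8_general q (zero_lt_one.trans hq) hq.ne' lam φ k hφ X Y hY
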